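/- Let (a,b) ⊆ ℝ and let W : (a,b) → Matrix N N ℂ be a smooth Hermitian-valued invertible density with finite moments. Let D(y) = y''F₂ + y'F₁ + yF₀ where F₂, F₁, F₀ are matrix rational functions with no poles in the closure of (a,b), F₂(t) invertible for t ∈ (a,b), F₂W = WF₂*, and lim_{x→a⁺} p(x)(F₂(x)W(x))* = 0 = lim_{x→b⁻} p(x)(F₂(x)W(x))* for every matrix rational function p with no poles in the closure of (a,b). Assume D(y) = [((y' − yP⁻¹P')F₂W)' + (y' − yP⁻¹P')F₂W(P⁻¹P')*]·W⁻¹ for all twice differentiable y, where P is invertible on the closure of (a,b) and P⁻¹P' is a matrix rational function with no poles in the closure of (a,b). Let X ⊆ ℕ be finite and let Pₙ, n ∈ ℕ∖X, be matrix polynomials with nonsingular leading coefficients, orthogonal with respect to W and satisfying D(Pₙ) = Γₙ·Pₙ for matrices Γₙ. Then: (i) the operator D̃ = −(∂ − P⁻¹P') ∘ (∂ − P⁻¹P')† ∘ F₂ is symmetric with respect to (F₂W, ℛ_{a,b}), i.e. ∫_a^b D̃(p)·F₂W·q* dt = ∫_a^b p·F₂W·(D̃(q))* dt for all p,q ∈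 ℛ_{a,b}; and (ii) the functions Pₙ' − PₙP⁻¹P', n ∈ ℕ∖X, are mutually orthogonal with respect to F₂W: ∫_a^b (Pₙ' − PₙP⁻¹P')·F₂W·(Pₘ' − PₘP⁻¹P')* dt = 0 for n ≠ m. -/

import Mathlib

/-!
Write `V = P⁻¹P'`, `M = F₂W` (which is Hermitian) and `E†` for the formal adjoint of
`∂ − P⁻¹P'` with respect to `W`. Both claims are integrations by parts whose boundary terms
vanish.

The factorization of `D` forces `F₁W = M' − VM + MV*`, as one sees by applying it at `t` to
`y(s) = (s − t)·1`. Hence `φ = E†(yF₂)` equals `−(y'F₂ + y(F₁ + VF₂))`: the factor `W⁻¹`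
disappears, `φ` is rational whenever `y` is, and so is `D̃(y) = −(φ' − φV)`. Rational functions
without poles on the closed interval are products of polynomials and bounded functions, so the
finite moments of `W` make every `A W B*` with rational `A`, `B` integrable
(`IsMatRatOn.integrableOn_mul`); the boundary hypothesis makes every `A M B*` tend to `0` at both
ends (`tendsto_sandwich`), so that its derivative, if integrable, has integral `0`
(`integral_deriv_eq_zero`).

For the symmetry of `D̃`, let `φ = E†(pF₂)` and `ψ = E†(qF₂)`. Then
`D̃(p) M q* + φ W ψ* = −(φ M q*)'` and `p M D̃(q)* + φ W ψ* = −(p M ψ*)'`, so both integrals equal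
`−∫ φ W ψ*`. For the orthogonality, let `Qₙ = Pₙ' − PₙV`. The factorization gives
`D(Pₙ) W Pₘ* + Qₙ M Qₘ* = (Qₙ M Pₘ*)'`, and `∫ D(Pₙ) W Pₘ* = Γₙ ∫ Pₙ W Pₘ* = 0`.
-/

open MeasureTheory Filter Polynomial Matrix

noncomputable section

abbrev Mat (N : ℕ) := Matrix (Fin N) (Fin N) ℂ

abbrev MatPoly (N : ℕ) := Matrix (Fin N) (Fin N) (Polynomial ℂ)

def mpEval {N : ℕ} (P : MatPoly N) (t : ℝ) : Mat N :=
  Matrix.of fun i j => (P i j).eval (t : ℂ)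

def mpDeriv {N : ℕ} (P : MatPoly N) : MatPoly N :=
  Matrix.of fun i j => derivative (P i j)

def matDeriv {N : ℕ} (f : ℝ → Mat N) : ℝ → Mat N :=
  fun t => Matrix.of fun i j => deriv (fun s => f s i j) t

def DiffOn {N : ℕ} (S : Set ℝ) (f : ℝ → Mat N) : Prop :=
  ∀ (i j : Fin N), ∀ t ∈ S, DifferentiableAt ℝ (fun s => f s i j) t

def TwiceDiffOn {N : ℕ} (S : Set ℝ) (f : ℝ → Mat N) : Prop :=
  DiffOn S f ∧ DiffOn S (matDeriv f)

def secondOrd {N : ℕ} (F₀ F₁ F₂ : ℝ → Mat N) (y : ℝ → Mat N) : ℝ → Mat N :=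
  fun t => matDeriv (matDeriv y) t * F₂ t + matDeriv y t * F₁ t + y t * F₀ t

/-- a scalar function is a rational function with no poles in `S` -/
def IsRatOn (S : Set ℝ) (f : ℝ → ℂ) : Prop :=
  ∃ p q : Polynomial ℂ, ∀ t ∈ S,
    q.eval (t : ℂ) ≠ 0 ∧ f t = p.eval (t : ℂ) / q.eval (t : ℂ)

/-- a matrix function belongs to `ℛ_{a,b}`: entrywise rational with no poles in `S`. -/
def IsMatRatOn {N : ℕ} (S : Set ℝ) (f : ℝ → Mat N) : Prop :=
  ∀ (i j : Fin N), IsRatOn S (fun t => f t i j)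

/-- the formal adjoint `(∂ − P⁻¹P')†` with respect to `W`, applied to `z`:
`E†(z) = (−(zW)' − zW(P⁻¹P')*)·W⁻¹`. -/
def Edag {N : ℕ} (W P : ℝ → Mat N) (z : ℝ → Mat N) : ℝ → Mat N :=
  fun t => (-(matDeriv (fun s => z s * W s) t)
      - z t * W t * ((P t)⁻¹ * matDeriv P t)ᴴ) * (W t)⁻¹

/-- `D̃ = −(∂ − P⁻¹P') ∘ (∂ − P⁻¹P')† ∘ F₂`, i.e. `D̃(y) = −E(E†(y·F₂))`. -/
def Dtil {N : ℕ} (W P F₂ : ℝ → Mat N) (y : ℝ → Mat N) : ℝ → Mat N :=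
  fun t => -(matDeriv (Edag W P (fun u => y u * F₂ u)) t
      - Edag W P (fun u => y u * F₂ u) t * ((P t)⁻¹ * matDeriv P t))

def leftEnd (a : EReal) : Filter ℝ :=
  comap (fun t : ℝ => (t : EReal)) (nhdsWithin a (Set.Ioi a))

def rightEnd (b : EReal) : Filter ℝ :=
  comap (fun t : ℝ => (t : EReal)) (nhdsWithin b (Set.Iio b))

/-! ### Integrals of derivatives over an interval with extended-real ends -/

lemma integral_left {a : EReal} {c : ℝ} (hac : a < c) {f f' : ℝ → ℂ}
    (hd : ∀ t : ℝ, a < t → t ≤ c → HasDerivAt f (f' t) t)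
    (hi : IntegrableOn f' {t : ℝ | a < t ∧ t ≤ c})
    (hl : Tendsto f (leftEnd a) (nhds 0)) :
    ∫ t in {t : ℝ | a < t ∧ t ≤ c}, f' t = f c := by
  have hcont : ContinuousAt f c := (hd c hac le_rfl).continuousAt
  induction a with
  | bot =>
    have hS : {t : ℝ | (⊥ : EReal) < t ∧ t ≤ c} = Set.Iic c := by ext; simp
    have hl' : Tendsto f atBot (nhds 0) := by
      have : Tendsto (id : ℝ → ℝ) atBot (leftEnd ⊥) :=
        tendsto_comap_iff.2 (tendsto_nhdsWithin_iff.2 ⟨EReal.tendsto_coe_atBot,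
          Eventually.of_forall fun t => EReal.bot_lt_coe t⟩)
      exact hl.comp this
    rw [hS] at hi ⊢
    rw [integral_Iic_of_hasDerivAt_of_tendsto' (fun x hx => hd x (EReal.bot_lt_coe x) hx) hi hl',
      sub_zero]
  | top => simp at hac
  | coe a =>
    have hac' : a < c := by exact_mod_cast hac
    have hS : {t : ℝ | (a : EReal) < t ∧ t ≤ c} = Set.Ioc a c := by ext; simp
    have hl' : Tendsto f (nhdsWithin a (Set.Ioi a)) (nhds 0) := by
      have : Tendsto (id : ℝ → ℝ) (nhdsWithin a (Set.Ioi a)) (leftEnd a) := by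
        refine tendsto_comap_iff.2 (tendsto_nhdsWithin_iff.2 ⟨?_, ?_⟩)
        · exact (continuous_coe_real_ereal.tendsto a).mono_left nhdsWithin_le_nhds
        · filter_upwards [self_mem_nhdsWithin] with t ht
          simpa using ht
      exact hl.comp this
    rw [hS] at hi ⊢
    rw [← intervalIntegral.integral_of_le hac'.le,
      intervalIntegral.integral_eq_sub_of_hasDerivAt_of_tendsto hac'
        (fun x hx => hd x (by exact_mod_cast hx.1) hx.2.le)
        ((intervalIntegrable_iff_integrableOn_Ioc_of_le hac'.le).2 hi) hl'
        (hcont.tendsto.mono_left nhdsWithin_le_nhds), sub_zero]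

lemma integral_right {b : EReal} {c : ℝ} (hcb : c < b) {f f' : ℝ → ℂ}
    (hd : ∀ t : ℝ, c ≤ t → t < b → HasDerivAt f (f' t) t)
    (hi : IntegrableOn f' {t : ℝ | c < t ∧ t < b})
    (hr : Tendsto f (rightEnd b) (nhds 0)) :
    ∫ t in {t : ℝ | c < t ∧ t < b}, f' t = -f c := by
  have hcont : ContinuousAt f c := (hd c le_rfl hcb).continuousAt
  induction b with
  | top =>
    have hS : {t : ℝ | c < t ∧ t < (⊤ : EReal)} = Set.Ioi c := by ext; simp
    have hr' : Tendsto f atTop (nhds 0) := by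
      have : Tendsto (id : ℝ → ℝ) atTop (rightEnd ⊤) :=
        tendsto_comap_iff.2 (tendsto_nhdsWithin_iff.2 ⟨EReal.tendsto_coe_atTop,
          Eventually.of_forall fun t => EReal.coe_lt_top t⟩)
      exact hr.comp this
    rw [hS] at hi ⊢
    rw [integral_Ioi_of_hasDerivAt_of_tendsto' (fun x hx => hd x hx (EReal.coe_lt_top x)) hi hr',
      zero_sub]
  | bot => simp at hcb
  | coe b =>
    have hcb' : c < b := by exact_mod_cast hcb
    have hS : {t : ℝ | c < t ∧ t < (b : EReal)} = Set.Ioo c b := by ext; simp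
    have hr' : Tendsto f (nhdsWithin b (Set.Iio b)) (nhds 0) := by
      have : Tendsto (id : ℝ → ℝ) (nhdsWithin b (Set.Iio b)) (rightEnd b) := by
        refine tendsto_comap_iff.2 (tendsto_nhdsWithin_iff.2 ⟨?_, ?_⟩)
        · exact (continuous_coe_real_ereal.tendsto b).mono_left nhdsWithin_le_nhds
        · filter_upwards [self_mem_nhdsWithin] with t ht
          simpa using ht
      exact hr.comp this
    rw [hS] at hi ⊢
    rw [← integral_Ioc_eq_integral_Ioo, ← intervalIntegral.integral_of_le hcb'.le,
      intervalIntegral.integral_eq_sub_of_hasDerivAt_of_tendsto hcb'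
        (fun x hx => hd x hx.1.le (by exact_mod_cast hx.2))
        ((intervalIntegrable_iff_integrableOn_Ioo_of_le hcb'.le).2 hi) 
        (hcont.tendsto.mono_left nhdsWithin_le_nhds) hr', zero_sub]

/-- The integral over `(a,b)` of an integrable derivative vanishes when the primitive tends to `0`
at both ends, finite or infinite. -/
lemma integral_deriv_eq_zero {a b : EReal} (hab : a < b) {f f' : ℝ → ℂ}
    (hd : ∀ t : ℝ, a < t → t < b → HasDerivAt f (f' t) t)
    (hi : IntegrableOn f' {t : ℝ | a < t ∧ t < b})
    (hl : Tendsto f (leftEnd a) (nhds 0)) (hr : Tendsto f (rightEnd b) (nhds 0)) :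
    ∫ t in {t : ℝ | a < t ∧ t < b}, f' t = 0 := by
  obtain ⟨c, hac, hcb⟩ := EReal.lt_iff_exists_real_btwn.1 hab
  have hS : {t : ℝ | a < t ∧ t < b} = {t : ℝ | a < t ∧ t ≤ c} ∪ {t : ℝ | c < t ∧ t < b} := by
    ext t
    simp only [Set.mem_ofPred_eq, Set.mem_union]
    constructor
    · rintro ⟨h1, h2⟩
      rcases le_or_gt t c with h | h
      · exact Or.inl ⟨h1, h⟩
      · exact Or.inr ⟨h, h2⟩
    · rintro (⟨h1, h2⟩ | ⟨h1, h2⟩)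
      · exact ⟨h1, lt_of_le_of_lt (by exact_mod_cast h2) hcb⟩
      · exact ⟨hac.trans (by exact_mod_cast h1), h2⟩
  have hdisj : Disjoint {t : ℝ | a < t ∧ t ≤ c} {t : ℝ | c < t ∧ t < b} :=
    Set.disjoint_left.2 fun t h1 h2 => not_lt.2 h1.2 h2.1
  have hm : MeasurableSet {t : ℝ | c < t ∧ t < b} :=
    measurableSet_Ioi.inter (measurable_coe_real_ereal measurableSet_Iio)
  rw [hS] at hi ⊢
  rw [setIntegral_union hdisj hm hi.left_of_union hi.right_of_union,
    integral_left hac (fun t h1 h2 => hd t h1 (lt_of_le_of_lt (by exact_mod_cast h2) hcb))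
      hi.left_of_union hl,
    integral_right hcb (fun t h1 h2 => hd t (hac.trans_le (by exact_mod_cast h1)) h2)
      hi.right_of_union hr, add_neg_cancel]

lemma eventually_leftEnd {a b : EReal} (hab : a < b) :
    ∀ᶠ t : ℝ in leftEnd a, a < (t : EReal) ∧ (t : EReal) < b :=
  (Ioo_mem_nhdsGT hab : Set.Ioo a b ∈ nhdsWithin a (Set.Ioi a)) |> preimage_mem_comap

lemma eventually_rightEnd {a b : EReal} (hab : a < b) :
    ∀ᶠ t : ℝ in rightEnd b, a < (t : EReal) ∧ (t : EReal) < b :=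
  (Ioo_mem_nhdsLT hab : Set.Ioo a b ∈ nhdsWithin b (Set.Iio b)) |> preimage_mem_comap

/-! ### Rational functions without poles -/

lemma IsRatOn.const (S : Set ℝ) (c : ℂ) : IsRatOn S (fun _ => c) :=
  ⟨C c, 1, fun t _ => by simp⟩

lemma IsRatOn.poly (S : Set ℝ) (p : ℂ[X]) : IsRatOn S (fun t => p.eval (t : ℂ)) :=
  ⟨p, 1, fun t _ => by simp⟩

lemma IsRatOn.add {S : Set ℝ} {f g : ℝ → ℂ} (hf : IsRatOn S f) (hg : IsRatOn S g) :
    IsRatOn S (fun t => f t + g t) := by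
  obtain ⟨p, q, h⟩ := hf
  obtain ⟨r, s, k⟩ := hg
  refine ⟨p * s + q * r, q * s, fun t ht => ?_⟩
  have h1 := (h t ht).1
  have h2 := (k t ht).1
  beta_reduce
  rw [(h t ht).2, (k t ht).2]
  simp only [eval_mul, eval_add]
  exact ⟨mul_ne_zero h1 h2, div_add_div _ _ h1 h2⟩

lemma IsRatOn.mul {S : Set ℝ} {f g : ℝ → ℂ} (hf : IsRatOn S f) (hg : IsRatOn S g) :
    IsRatOn S (fun t => f t * g t) := by
  obtain ⟨p, q, h⟩ := hf
  obtain ⟨r, s, k⟩ := hg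
  refine ⟨p * r, q * s, fun t ht => ?_⟩
  have h1 := (h t ht).1
  have h2 := (k t ht).1
  beta_reduce
  rw [(h t ht).2, (k t ht).2]
  simp only [eval_mul]
  exact ⟨mul_ne_zero h1 h2, div_mul_div_comm _ _ _ _⟩

lemma IsRatOn.sum {ι : Type*} {S : Set ℝ} (s : Finset ι) {f : ι → ℝ → ℂ}
    (hf : ∀ i, IsRatOn S (f i)) : IsRatOn S (fun t => ∑ i ∈ s, f i t) := by
  classical
  induction s using Finset.induction_on with
  | empty => simpa using IsRatOn.const S 0
  | insert i s hi ih => simpa [Finset.sum_insert hi] using (hf i).add ih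

/-- Conjugating the coefficients conjugates the values at real points. -/
lemma IsRatOn.star {S : Set ℝ} {f : ℝ → ℂ} (hf : IsRatOn S f) :
    IsRatOn S (fun t => star (f t)) := by
  obtain ⟨p, q, h⟩ := hf
  have key : ∀ (r : ℂ[X]) (t : ℝ),
      (r.map (starRingEnd ℂ)).eval (t : ℂ) = starRingEnd ℂ (r.eval (t : ℂ)) := by
    intro r t
    rw [eval_map, ← Polynomial.eval₂_at_apply, Complex.conj_ofReal]
  refine ⟨p.map (starRingEnd ℂ), q.map (starRingEnd ℂ), fun t ht => ?_⟩
  beta_reduce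
  rw [key, key, (h t ht).2]
  exact ⟨by simpa using (h t ht).1, by simp⟩

lemma hasDerivAt_polyEval (p : ℂ[X]) (t : ℝ) :
    HasDerivAt (fun s : ℝ => p.eval (s : ℂ)) (p.derivative.eval (t : ℂ)) t :=
  (p.hasDerivAt (t : ℂ)).comp_ofReal

lemma IsRatOn.exists_deriv {S T : Set ℝ} (hS : IsOpen S) (hST : S ⊆ T) {f : ℝ → ℂ}
    (hf : IsRatOn T f) :
    ∃ g, IsRatOn T g ∧ ∀ t ∈ S, HasDerivAt f (g t) t := by
  obtain ⟨p, q, h⟩ := hf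
  refine ⟨fun t => (derivative p * q - p * derivative q).eval (t : ℂ) / (q ^ 2).eval (t : ℂ),
    ⟨_, _, fun t ht => ⟨?_, rfl⟩⟩, fun t ht => ?_⟩
  · simpa using (h t ht).1
  · have := (hasDerivAt_polyEval p t).div (hasDerivAt_polyEval q t) (h t (hST ht)).1
    simp only [eval_sub, eval_mul, eval_pow]
    refine this.congr_of_eventuallyEq ?_
    filter_upwards [hS.mem_nhds ht] with s hs using (h s (hST hs)).2

/-- On a closed set free of zeros of `q`, the function `1 / q` is bounded: near infinity because
`|q|` is eventually at least `1` (or `q` is constant), elsewhere by compactness. -/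
lemma exists_bound_inv {T : Set ℝ} (hT : IsClosed T) (q : ℂ[X])
    (hq : ∀ t ∈ T, q.eval (t : ℂ) ≠ 0) : ∃ K, ∀ t ∈ T, ‖(q.eval (t : ℂ))⁻¹‖ ≤ K := by
  by_cases hdeg : 0 < q.degree
  · have hlim : Tendsto (fun t : ℝ => ‖q.eval (t : ℂ)‖) (Filter.cocompact ℝ) atTop := by
      refine q.tendsto_norm_atTop hdeg ?_
      simp only [Complex.norm_real]
      exact tendsto_norm_cocompact_atTop (E := ℝ)
    have hev := hlim.eventually_ge_atTop 1
    obtain ⟨Z, hZ, hZ'⟩ := Filter.mem_cocompact.1 hev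
    have hcont : ContinuousOn (fun t : ℝ => (q.eval (t : ℂ))⁻¹) (T ∩ Z) := fun t ht =>
      ((hasDerivAt_polyEval q t).continuousAt.inv₀ (hq t ht.1)).continuousWithinAt
    obtain ⟨K, hK⟩ := (hZ.inter_left hT).exists_bound_of_continuousOn hcont
    refine ⟨max K 1, fun t ht => ?_⟩
    by_cases htZ : t ∈ Z
    · exact (hK t ⟨ht, htZ⟩).trans (le_max_left _ _)
    · refine le_trans ?_ (le_max_right _ _)
      rw [norm_inv]
      exact inv_le_one_of_one_le₀ (hZ' htZ)
  · obtain ⟨c, rfl⟩ : ∃ c, q = C c := ⟨_, eq_C_of_degree_le_zero (not_lt.1 hdeg)⟩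
    exact ⟨‖c⁻¹‖, fun t _ => by simp⟩

/-- Rational functions without poles on the closed set `T ⊇ S` grow at most polynomially, so they
are integrable against any function with finite moments on `S`. -/
lemma IsRatOn.integrableOn_mul {S T : Set ℝ} (hS : IsOpen S) (hT : IsClosed T) (hST : S ⊆ T)
    {r w : ℝ → ℂ} (hr : IsRatOn T r)
    (hw : ∀ n : ℕ, IntegrableOn (fun t : ℝ => (t : ℂ) ^ n * w t) S) :
    IntegrableOn (fun t => r t * w t) S := by
  obtain ⟨p, q, h⟩ := hr
  have hp : IntegrableOn (fun t : ℝ => p.eval (t : ℂ) * w t) S := by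
    simp_rw [eval_eq_sum_range, Finset.sum_mul, mul_assoc]
    exact integrable_finsetSum _ fun n _ => (hw n).const_mul _
  obtain ⟨K, hK⟩ := exists_bound_inv hT q fun t ht => (h t ht).1
  have hcont : ContinuousOn (fun t : ℝ => (q.eval (t : ℂ))⁻¹) S := fun t ht =>
    ((hasDerivAt_polyEval q t).continuousAt.inv₀ (h t (hST ht)).1).continuousWithinAt
  have := Integrable.bdd_mul (c := K) hp (hcont.aestronglyMeasurable hS.measurableSet)
    ((ae_restrict_iff' hS.measurableSet).2 (Eventually.of_forall fun t ht => hK t (hST ht)))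
  refine (integrableOn_congr_fun (fun t ht => ?_) hS.measurableSet).2 this
  simp only [(h t (hST ht)).2]
  ring

/-! ### Matrix-valued rational functions and entrywise derivatives -/

section MatrixFunctions

variable {N : ℕ}

lemma IsMatRatOn.const (S : Set ℝ) (A : Mat N) : IsMatRatOn S (fun _ => A) :=
  fun i j => IsRatOn.const S (A i j)

lemma IsMatRatOn.add {S : Set ℝ} {f g : ℝ → Mat N} (hf : IsMatRatOn S f) (hg : IsMatRatOn S g) :
    IsMatRatOn S (fun t => f t + g t) :=
  fun i j => (hf i j).add (hg i j)

lemma IsMatRatOn.mul {S : Set ℝ} {f g : ℝ → Mat N} (hf : IsMatRatOn S f) (hg : IsMatRatOn S g) :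
    IsMatRatOn S (fun t => f t * g t) := by
  intro i j
  simp only [Matrix.mul_apply]
  exact IsRatOn.sum _ fun k => (hf i k).mul (hg k j)

lemma IsMatRatOn.neg {S : Set ℝ} {f : ℝ → Mat N} (hf : IsMatRatOn S f) :
    IsMatRatOn S (fun t => -f t) := by
  simpa using (IsMatRatOn.const S (-1 : Mat N)).mul hf

lemma IsMatRatOn.sub {S : Set ℝ} {f g : ℝ → Mat N} (hf : IsMatRatOn S f) (hg : IsMatRatOn S g) :
    IsMatRatOn S (fun t => f t - g t) := by
  simpa only [sub_eq_add_neg] using hf.add hg.neg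

lemma IsMatRatOn.mpEval (S : Set ℝ) (Q : MatPoly N) : IsMatRatOn S (fun t => mpEval Q t) :=
  fun i j => IsRatOn.poly S (Q i j)

/-- Entrywise derivative of a matrix-valued function; no norm on matrices is involved. -/
def MatHasDerivAt (f : ℝ → Mat N) (f' : Mat N) (t : ℝ) : Prop :=
  ∀ i j, HasDerivAt (fun s => f s i j) (f' i j) t

namespace MatHasDerivAt

variable {f g : ℝ → Mat N} {f' g' : Mat N} {t : ℝ}

lemma matDeriv_eq (h : MatHasDerivAt f f' t) : matDeriv f t = f' := by
  ext i j
  exact (h i j).deriv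

lemma const (A : Mat N) (t : ℝ) : MatHasDerivAt (fun _ => A) 0 t :=
  fun i j => hasDerivAt_const t (A i j)

lemma add (hf : MatHasDerivAt f f' t) (hg : MatHasDerivAt g g' t) :
    MatHasDerivAt (fun s => f s + g s) (f' + g') t :=
  fun i j => (hf i j).add (hg i j)

lemma sub (hf : MatHasDerivAt f f' t) (hg : MatHasDerivAt g g' t) :
    MatHasDerivAt (fun s => f s - g s) (f' - g') t :=
  fun i j => (hf i j).sub (hg i j)

lemma mul (hf : MatHasDerivAt f f' t) (hg : MatHasDerivAt g g' t) :
    MatHasDerivAt (fun s => f s * g s) (f' * g t + f t * g') t := by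
  intro i j
  simp only [Matrix.mul_apply, Matrix.add_apply, ← Finset.sum_add_distrib]
  exact HasDerivAt.fun_sum fun k _ => (hf i k).mul (hg k j)

lemma conjTranspose (hf : MatHasDerivAt f f' t) : MatHasDerivAt (fun s => (f s)ᴴ) f'ᴴ t :=
  fun i j => (hf j i).star

lemma congr (hf : MatHasDerivAt f f' t) (h : ∀ᶠ s in nhds t, g s = f s) :
    MatHasDerivAt g f' t :=
  fun i j => (hf i j).congr_of_eventuallyEq (h.mono fun s hs => by simp only [hs])

end MatHasDerivAt

lemma matHasDerivAt_mpEval (Q : MatPoly N) (t : ℝ) :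
    MatHasDerivAt (fun s => mpEval Q s) (mpEval (mpDeriv Q) t) t :=
  fun i j => hasDerivAt_polyEval (Q i j) t

lemma IsMatRatOn.exists_deriv {S T : Set ℝ} (hS : IsOpen S) (hST : S ⊆ T) {f : ℝ → Mat N}
    (hf : IsMatRatOn T f) :
    ∃ g, IsMatRatOn T g ∧ ∀ t ∈ S, MatHasDerivAt f (g t) t := by
  choose g hg hd using fun i j => (hf i j).exists_deriv hS hST
  exact ⟨fun t => Matrix.of fun i j => g i j t, hg, fun t ht i j => hd i j t ht⟩

lemma IsMatRatOn.integrableOn_mul {S T : Set ℝ} (hS : IsOpen S) (hT : IsClosed T) (hST : S ⊆ T)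
    {W : ℝ → Mat N}
    (hMom : ∀ (n : ℕ) (i j : Fin N), IntegrableOn (fun t : ℝ => (t : ℂ) ^ n * W t i j) S)
    {A B : ℝ → Mat N} (hA : IsMatRatOn T A) (hB : IsMatRatOn T B) (i j : Fin N) :
    IntegrableOn (fun t => (A t * W t * (B t)ᴴ) i j) S := by
  simp only [Matrix.mul_apply, Finset.sum_mul, conjTranspose_apply]
  refine integrable_finsetSum _ fun k _ => integrable_finsetSum _ fun l _ => ?_
  have h := ((hA i l).mul (hB j k).star).integrableOn_mul hS hT hST fun n => hMom n l k
  refine h.congr (Eventually.of_forall fun t => ?_)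
  simp only
  ring

/-- The boundary hypothesis, stated for left multiplication by rational functions, extends to a
rational factor on the right, because the entries of `Bᴴ` are scalar rational functions. -/
lemma tendsto_sandwich {T : Set ℝ} {l : Filter ℝ} {M : ℝ → Mat N}
    (h : ∀ p : ℝ → Mat N, IsMatRatOn T p → ∀ i j : Fin N,
      Tendsto (fun t => (p t * (M t)ᴴ) i j) l (nhds 0))
    (hM : ∀ᶠ t in l, (M t)ᴴ = M t)
    {A B : ℝ → Mat N} (hA : IsMatRatOn T A) (hB : IsMatRatOn T B) (i j : Fin N) :
    Tendsto (fun t => (A t * M t * (B t)ᴴ) i j) l (nhds 0) := by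
  have h1 : Tendsto (fun t => ∑ k, ((Matrix.of fun u v => star (B t j k) * A t u v : Mat N)
      * (M t)ᴴ) i k) l (nhds 0) := by
    rw [← Finset.sum_const_zero (s := (Finset.univ : Finset (Fin N)))]
    exact tendsto_finsetSum _ fun k _ =>
      h _ (fun u v => (hB j k).star.mul (hA u v)) i k
  refine h1.congr' ?_
  filter_upwards [hM] with t ht
  rw [ht, Matrix.mul_apply]
  refine Finset.sum_congr rfl fun k _ => ?_
  simp only [Matrix.mul_apply, Matrix.of_apply, conjTranspose_apply, Finset.sum_mul]
  exact Finset.sum_congr rfl fun m _ => by ring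

end MatrixFunctions

/-! ### The Darboux transformation -/

/-- If `D` admits the self-adjoint factorization
`D = −(∂ − P⁻¹P')† ∘ F₂ ∘ (∂ − P⁻¹P')`, then the exchanged operator
`D̃ = −(∂ − P⁻¹P') ∘ (∂ − P⁻¹P')† ∘ F₂` is symmetric with respect to `(F₂W, ℛ_{a,b})`,
and the functions `Pₙ' − PₙP⁻¹P'` are mutually orthogonal with respect to `F₂W`. -/
theorem darboux_transformed_operator_symmetric_and_orthogonality
    (N : ℕ) (a b : EReal) (hab : a < b)
    (S : Set ℝ) (hS : S = {t : ℝ | a < (t : EReal) ∧ (t : EReal) < b})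
    (Scl : Set ℝ) (hScl : Scl = {t : ℝ | a ≤ (t : EReal) ∧ (t : EReal) ≤ b})
    (W : ℝ → Mat N)
    (hWsmooth : ∀ (i j : Fin N), ContDiffOn ℝ (⊤ : ℕ∞) (fun t => W t i j) S)
    (hHerm : ∀ t ∈ S, (W t).IsHermitian)
    (hWinv : ∀ t ∈ S, IsUnit (W t))
    (hMom : ∀ (n : ℕ) (i j : Fin N), IntegrableOn (fun t : ℝ => (t : ℂ) ^ n * W t i j) S)
    (F₂ F₁ F₀ : ℝ → Mat N)
    (hrat2 : IsMatRatOn Scl F₂) (hrat1 : IsMatRatOn Scl F₁) (hrat0 : IsMatRatOn Scl F₀)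
    (hF₂inv : ∀ t ∈ S, IsUnit (F₂ t))
    (heqF₂W : ∀ t ∈ S, F₂ t * W t = W t * (F₂ t)ᴴ)
    (hbda : ∀ p : ℝ → Mat N, IsMatRatOn Scl p → ∀ (i j : Fin N),
      Tendsto (fun t => (p t * (F₂ t * W t)ᴴ) i j) (leftEnd a) (nhds 0))
    (hbdb : ∀ p : ℝ → Mat N, IsMatRatOn Scl p → ∀ (i j : Fin N),
      Tendsto (fun t => (p t * (F₂ t * W t)ᴴ) i j) (rightEnd b) (nhds 0))
    (P : ℝ → Mat N)
    (hPdiff : DiffOn S P)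
    (hPinv : ∀ t ∈ Scl, IsUnit (P t))
    (hVrat : IsMatRatOn Scl (fun t => (P t)⁻¹ * matDeriv P t))
    -- the self-adjoint factorization `D = −(∂ − P⁻¹P')† ∘ F₂ ∘ (∂ − P⁻¹P')`
    (hfact : ∀ y : ℝ → Mat N, TwiceDiffOn S y → ∀ t ∈ S,
      secondOrd F₀ F₁ F₂ y t
        = (matDeriv (fun s =>
              (matDeriv y s - y s * ((P s)⁻¹ * matDeriv P s)) * F₂ s * W s) t
            + (matDeriv y t - y t * ((P t)⁻¹ * matDeriv P t)) * F₂ t * W t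
                * ((P t)⁻¹ * matDeriv P t)ᴴ) * (W t)⁻¹)
    (X : Finset ℕ) (Pn : ℕ → MatPoly N) (Γ : ℕ → Mat N)
    (hlead : ∀ n ∉ X, ∃ d : ℕ, (∀ i j, ((Pn n) i j).degree ≤ (d : ℕ)) ∧
      IsUnit (Matrix.of fun i j => ((Pn n) i j).coeff d))
    (horth : ∀ n ∉ X, ∀ m ∉ X, n ≠ m →
      (Matrix.of fun i j =>
        ∫ t in S, (mpEval (Pn n) t * W t * (mpEval (Pn m) t)ᴴ) i j) = (0 : Mat N))
    (heig : ∀ n ∉ X, ∀ t ∈ S,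
      secondOrd F₀ F₁ F₂ (fun s => mpEval (Pn n) s) t = Γ n * mpEval (Pn n) t) :
    -- (i) `D̃` is symmetric with respect to `(F₂W, ℛ_{a,b})`
    (∀ p q : ℝ → Mat N, IsMatRatOn Scl p → IsMatRatOn Scl q →
      (Matrix.of fun i j =>
        ∫ t in S, (Dtil W P F₂ p t * (F₂ t * W t) * (q t)ᴴ) i j)
      = (Matrix.of fun i j =>
        ∫ t in S, (p t * (F₂ t * W t) * (Dtil W P F₂ q t)ᴴ) i j)) ∧
    -- (ii) the functions `Pₙ' − PₙP⁻¹P'` are orthogonal with respect to `F₂W`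
    (∀ n ∉ X, ∀ m ∉ X, n ≠ m →
      (Matrix.of fun i j =>
        ∫ t in S,
          ((mpEval (mpDeriv (Pn n)) t - mpEval (Pn n) t * ((P t)⁻¹ * matDeriv P t))
            * (F₂ t * W t)
            * (mpEval (mpDeriv (Pn m)) t - mpEval (Pn m) t * ((P t)⁻¹ * matDeriv P t))ᴴ)
            i j) = (0 : Mat N)) := by
  -- the interval and its closure
  have hSo : IsOpen S := by
    rw [hS]
    exact isOpen_Ioo.preimage continuous_coe_real_ereal
  have hTc : IsClosed Scl := by
    rw [hScl]
    exact isClosed_Icc.preimage continuous_coe_real_ereal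
  have hST : S ⊆ Scl := by
    rw [hS, hScl]
    exact fun t ht => ⟨ht.1.le, ht.2.le⟩
  have hmem : ∀ t : ℝ, a < t → t < b → t ∈ S := fun t h1 h2 => by
    rw [hS]
    exact ⟨h1, h2⟩
  set V : ℝ → Mat N := fun t => (P t)⁻¹ * matDeriv P t with hV
  -- derivatives of the data
  obtain ⟨F₂', -, hF₂'⟩ := hrat2.exists_deriv hSo hST
  obtain ⟨V', hV'rat, hV'⟩ := hVrat.exists_deriv hSo hST
  have hW' : ∀ t ∈ S, MatHasDerivAt W (matDeriv W t) t := fun t ht i j =>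
    (((hWsmooth i j).contDiffAt (hSo.mem_nhds ht)).differentiableAt (by simp)).hasDerivAt
  set M : ℝ → Mat N := fun t => F₂ t * W t with hM
  obtain ⟨M', hM'⟩ : ∃ M' : ℝ → Mat N, ∀ t ∈ S, MatHasDerivAt M (M' t) t :=
    ⟨_, fun t ht => (hF₂' t ht).mul (hW' t ht)⟩
  have hMH : ∀ t ∈ S, (M t)ᴴ = M t := fun t ht => by
    simp only [hM]
    rw [conjTranspose_mul, (hHerm t ht).eq, heqF₂W t ht]
  have hM'H : ∀ t ∈ S, (M' t)ᴴ = M' t := fun t ht => by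
    have h1 := (hM' t ht).conjTranspose.congr (g := M)
      (by filter_upwards [hSo.mem_nhds ht] with s hs using (hMH s hs).symm)
    rw [← h1.matDeriv_eq, (hM' t ht).matDeriv_eq]
  have hdet : ∀ t ∈ S, IsUnit (W t).det := fun t ht =>
    (Matrix.isUnit_iff_isUnit_det _).1 (hWinv t ht)
  have hint : ∀ {A B : ℝ → Mat N}, IsMatRatOn Scl A → IsMatRatOn Scl B → ∀ i j,
      IntegrableOn (fun t => (A t * W t * (B t)ᴴ) i j) S :=
    fun hA hB i j => hA.integrableOn_mul hSo hTc hST hMom hB i j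
  -- integration by parts without boundary terms
  have green : ∀ {A B A' B' U Z : ℝ → Mat N} (c : ℂ), IsMatRatOn Scl A → IsMatRatOn Scl B →
      (∀ t ∈ S, MatHasDerivAt A (A' t) t) → (∀ t ∈ S, MatHasDerivAt B (B' t) t) →
      (∀ i j, IntegrableOn (fun t => U t i j) S) → (∀ i j, IntegrableOn (fun t => Z t i j) S) →
      (∀ t ∈ S, U t + Z t
        = c • ((A' t * M t + A t * M' t) * (B t)ᴴ + A t * M t * (B' t)ᴴ)) →
      ∀ i j, ∫ t in S, U t i j = -∫ t in S, Z t i j := by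
    intro A B A' B' U Z c hA hB hA' hB' hU hZ hUZ i j
    have hl := (tendsto_sandwich hbda
      ((eventually_leftEnd hab).mono fun t ht => hMH t (hmem t ht.1 ht.2)) hA hB i j).const_mul c
    have hr := (tendsto_sandwich hbdb
      ((eventually_rightEnd hab).mono fun t ht => hMH t (hmem t ht.1 ht.2)) hA hB i j).const_mul c
    rw [mul_zero] at hl hr
    have hd : ∀ t : ℝ, a < t → t < b →
        HasDerivAt (fun s => c * (A s * M s * (B s)ᴴ) i j) (U t i j + Z t i j) t := by
      intro t h1 h2
      have ht := hmem t h1 h2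
      have h := (((hA' t ht).mul (hM' t ht)).mul (hB' t ht).conjTranspose i j).const_mul c
      have e := congrFun (congrFun (hUZ t ht) i) j
      rw [Matrix.smul_apply, smul_eq_mul, Matrix.add_apply] at e
      rw [e]
      exact h
    have h0 := integral_deriv_eq_zero hab hd (hS ▸ (hU i j).add (hZ i j)) hl hr
    rw [← hS, integral_add (hU i j) (hZ i j)] at h0
    exact eq_neg_of_add_eq_zero_left h0
  -- evaluating the factorization at `y(s) = (s - t)•1`, which vanishes at `t`, isolates `F₁ t`
  have hF₁ : ∀ t ∈ S, F₁ t * W t = M' t - V t * M t + M t * (V t)ᴴ := by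
    intro t ht
    set y : ℝ → Mat N := fun s => Matrix.diagonal fun _ => ((s - t : ℝ) : ℂ) with hy
    have hyd : ∀ s, MatHasDerivAt y 1 s := by
      intro s i j
      by_cases hij : i = j
      · subst hij
        simpa [hy] using ((hasDerivAt_id s).sub_const t).ofReal_comp
      · simpa [hy, Matrix.diagonal_apply_ne _ hij, Matrix.one_apply_ne hij] using
          hasDerivAt_const s (0 : ℂ)
    have hyd' : matDeriv y = fun _ => 1 := funext fun s => (hyd s).matDeriv_eq
    have hyt : y t = 0 := by simp [hy]
    have hf := hfact y ⟨fun i j s _ => (hyd s i j).differentiableAt, by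
      rw [hyd']
      exact fun i j s _ => (MatHasDerivAt.const 1 s i j).differentiableAt⟩ t ht
    have hD := (((MatHasDerivAt.const 1 t).sub ((hyd t).mul (hV' t ht))).mul (hM' t ht)).matDeriv_eq
    simp only [secondOrd, hyd', hyt, (MatHasDerivAt.const (1 : Mat N) t).matDeriv_eq,
      Matrix.mul_assoc] at hf
    simp only [hM] at hD
    rw [hD] at hf
    simp only [hyt, zero_mul, one_mul, add_zero, zero_add, sub_zero, zero_sub] at hf
    rw [hf, Matrix.mul_assoc, Matrix.nonsing_inv_mul _ (hdet t ht), Matrix.mul_one]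
    simp only [hM, Matrix.mul_assoc]
    noncomm_ring
  -- `E†(yF₂)` is rational for rational `y`
  have hphi : ∀ {y : ℝ → Mat N}, IsMatRatOn Scl y → ∃ y' φ φ' : ℝ → Mat N,
      IsMatRatOn Scl φ ∧ IsMatRatOn Scl φ' ∧ (∀ t ∈ S, MatHasDerivAt y (y' t) t) ∧
      (∀ t ∈ S, MatHasDerivAt φ (φ' t) t) ∧
      (∀ t ∈ S, Dtil W P F₂ y t = -(φ' t - φ t * V t)) ∧
      (∀ t ∈ S, φ t * W t = -(y' t * M t + y t * M' t) - y t * M t * (V t)ᴴ) := by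
    intro y hy
    obtain ⟨y', hy', hyd⟩ := hy.exists_deriv hSo hST
    have hφ : IsMatRatOn Scl (fun t => -(y' t * F₂ t + y t * (F₁ t + V t * F₂ t))) :=
      ((hy'.mul hrat2).add (hy.mul (hrat1.add (hVrat.mul hrat2)))).neg
    obtain ⟨φ', hφ', hφd⟩ := hφ.exists_deriv hSo hST
    have hφW : ∀ t ∈ S, (-(y' t * F₂ t + y t * (F₁ t + V t * F₂ t))) * W t
        = -(y' t * M t + y t * M' t) - y t * M t * (V t)ᴴ := by
      intro t ht
      have e : (-(y' t * F₂ t + y t * (F₁ t + V t * F₂ t))) * W t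
          = -(y' t * M t + y t * (F₁ t * W t + V t * M t)) := by
        simp only [hM]
        noncomm_ring
      rw [e, hF₁ t ht]
      noncomm_ring
    have hE : ∀ t ∈ S, Edag W P (fun u => y u * F₂ u) t
        = -(y' t * F₂ t + y t * (F₁ t + V t * F₂ t)) := by
      intro t ht
      have hd := ((hyd t ht).mul (hM' t ht)).matDeriv_eq
      simp only [hM, ← Matrix.mul_assoc] at hd
      have e : Edag W P (fun u => y u * F₂ u) t
          = (-(y' t * M t + y t * M' t) - y t * M t * (V t)ᴴ) * (W t)⁻¹ := by
        simp only [Edag, hd, hM, hV]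
        simp only [Matrix.mul_assoc]
      rw [e, ← hφW t ht, Matrix.mul_assoc, Matrix.mul_nonsing_inv _ (hdet t ht), Matrix.mul_one]
    refine ⟨y', _, φ', hφ, hφ', hyd, hφd, fun t ht => ?_, hφW⟩
    have hd := ((hφd t ht).congr (g := Edag W P (fun u => y u * F₂ u))
      (by filter_upwards [hSo.mem_nhds ht] with s hs using hE s hs)).matDeriv_eq
    simp only [Dtil, hd, hE t ht, hV]
  refine ⟨fun p q hp hq => ?_, fun n hn m hm hnm => ?_⟩
  · obtain ⟨p', φ, φ', hφ, hφ', hpd, hφd, hDp, hφW⟩ := hphi hp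
    obtain ⟨q', ψ, ψ', hψ, hψ', hqd, hψd, hDq, hψW⟩ := hphi hq
    have hφψ := hint hφ hψ
    have hI1 : ∀ i j, IntegrableOn
        (fun t => (Dtil W P F₂ p t * (F₂ t * W t) * (q t)ᴴ) i j) S := fun i j => by
      refine (integrableOn_congr_fun (fun t ht => ?_) hSo.measurableSet).2
        (hint ((hφ'.sub (hφ.mul hVrat)).neg.mul hrat2) hq i j)
      simp only [hDp t ht, hV, Matrix.mul_assoc]
    have hI2 : ∀ i j, IntegrableOn
        (fun t => (p t * (F₂ t * W t) * (Dtil W P F₂ q t)ᴴ) i j) S := fun i j => by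
      refine (integrableOn_congr_fun (fun t ht => ?_) hSo.measurableSet).2
        (hint (hp.mul hrat2) (hψ'.sub (hψ.mul hVrat)).neg i j)
      simp only [hDq t ht, hV, Matrix.mul_assoc]
    -- both sides equal `-∫ φ W ψ*`, where `φ = E†(pF₂)` and `ψ = E†(qF₂)`
    ext i j
    simp only [Matrix.of_apply]
    rw [green (-1) hφ hq hφd hqd hI1 hφψ ?_ i j, green (-1) hp hψ hpd hψd hI2 hφψ ?_ i j]
    · intro t ht
      have e : p t * (F₂ t * W t) * (Dtil W P F₂ q t)ᴴ
          = p t * M t * (-((ψ' t)ᴴ - (V t)ᴴ * (ψ t)ᴴ)) := by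
        simp only [hDq t ht, conjTranspose_neg, conjTranspose_sub, conjTranspose_mul, hM]
      rw [e, hφW t ht, neg_one_smul]
      noncomm_ring
    · intro t ht
      have e := congrArg Matrix.conjTranspose (hψW t ht)
      simp only [conjTranspose_neg, conjTranspose_sub, conjTranspose_mul, conjTranspose_add,
        conjTranspose_conjTranspose, hMH t ht, hM'H t ht, (hHerm t ht).eq] at e
      have e2 : F₂ t * W t = M t := rfl
      rw [hDp t ht, Matrix.mul_assoc (φ t) (W t), e, neg_one_smul, e2]
      noncomm_ring
  · have hQ : ∀ k, IsMatRatOn Scl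
        (fun t => mpEval (mpDeriv (Pn k)) t - mpEval (Pn k) t * V t) := fun k =>
      (IsMatRatOn.mpEval Scl _).sub ((IsMatRatOn.mpEval Scl _).mul hVrat)
    obtain ⟨Q', hQ', hQd⟩ := (hQ n).exists_deriv hSo hST
    have hyd' : matDeriv (fun s => mpEval (Pn n) s) = fun s => mpEval (mpDeriv (Pn n)) s :=
      funext fun s => (matHasDerivAt_mpEval (Pn n) s).matDeriv_eq
    -- the eigenvalue equation read through the factorization
    have hD : ∀ t ∈ S, Γ n * mpEval (Pn n) t * W t = Q' t * M t
        + (mpEval (mpDeriv (Pn n)) t - mpEval (Pn n) t * V t) * M' t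
        + (mpEval (mpDeriv (Pn n)) t - mpEval (Pn n) t * V t) * M t * (V t)ᴴ := by
      intro t ht
      have hf := hfact (fun s => mpEval (Pn n) s)
        ⟨fun i j s _ => (matHasDerivAt_mpEval (Pn n) s i j).differentiableAt, by
          rw [hyd']
          exact fun i j s _ => (matHasDerivAt_mpEval (mpDeriv (Pn n)) s i j).differentiableAt⟩ t ht
      rw [heig n hn t ht] at hf
      have hd := ((hQd t ht).mul (hM' t ht)).matDeriv_eq
      simp only [hM, ← Matrix.mul_assoc] at hd
      simp only [hyd'] at hf
      rw [hd] at hf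
      rw [hf, Matrix.mul_assoc, Matrix.nonsing_inv_mul _ (hdet t ht), Matrix.mul_one]
      simp only [hM, hV, Matrix.mul_assoc]
    ext i j
    simp only [Matrix.of_apply, Matrix.zero_apply]
    have hI1 : ∀ i j, IntegrableOn (fun t =>
        ((mpEval (mpDeriv (Pn n)) t - mpEval (Pn n) t * V t) * (F₂ t * W t)
          * (mpEval (mpDeriv (Pn m)) t - mpEval (Pn m) t * V t)ᴴ) i j) S := fun i j => by
      refine (hint ((hQ n).mul hrat2) (hQ m) i j).congr (Eventually.of_forall fun t => ?_)
      simp only [Matrix.mul_assoc]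
    have hI2 : ∀ i j, IntegrableOn (fun t =>
        ((Γ n * mpEval (Pn n) t) * W t * (mpEval (Pn m) t)ᴴ) i j) S :=
      hint ((IsMatRatOn.const Scl (Γ n)).mul (IsMatRatOn.mpEval Scl (Pn n)))
        (IsMatRatOn.mpEval Scl (Pn m))
    rw [green 1 (hQ n) (IsMatRatOn.mpEval Scl (Pn m)) hQd
      (fun t _ => matHasDerivAt_mpEval (Pn m) t) hI1 hI2 ?_ i j]
    · have h0 : ∀ k, ∫ t in S, (mpEval (Pn n) t * W t * (mpEval (Pn m) t)ᴴ) k j = 0 :=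
        fun k => congrFun (congrFun (horth n hn m hm hnm) k) j
      have e : ∀ t, ((Γ n * mpEval (Pn n) t) * W t * (mpEval (Pn m) t)ᴴ) i j
          = ∑ k, Γ n i k * (mpEval (Pn n) t * W t * (mpEval (Pn m) t)ᴴ) k j := fun t => by
        rw [Matrix.mul_assoc, Matrix.mul_assoc, Matrix.mul_apply, Matrix.mul_assoc]
      simp only [e]
      rw [integral_finsetSum _ fun k _ =>
        (hint (IsMatRatOn.mpEval Scl (Pn n)) (IsMatRatOn.mpEval Scl (Pn m)) k j).const_mul _]
      simp only [integral_const_mul, h0, mul_zero, Finset.sum_const_zero, neg_zero]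
    · intro t ht
      have e2 : F₂ t * W t = M t := rfl
      rw [hD t ht, e2, one_smul, conjTranspose_sub, conjTranspose_mul]
      noncomm_ring
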